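/- If k > 1 is an odd positive integer, then there is no interlocking pair (m, n) of positive integers with m·n = P_k, where P_k denotes the product of the first k primes. -/

import Mathlib

/-!
Between two consecutive divisors `> 1` of one member of an interlocking pair lies a divisor of the
other, so the numbers of divisors of `m` and `n` differ by at most `1`. If `m * n` is squarefree,
these numbers are `2 ^ a` and `2 ^ b`, where `a` and `b` count the prime factors of `m` and `n`.
Two powers of `2` at distance at most `1` are equal or are `1` and `2`; hence `a = b`, and `m * n`
has the even number `2 * a` of prime factors, unless it has only one.
-/

/-- `(m, n)` is an interlocking pair: both are positive, and between any two
consecutive divisors (the smaller one exceeding 1) of either number there is a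
divisor of the other. -/
def Interlocking (m n : ℕ) : Prop :=
  0 < m ∧ 0 < n ∧
  (∀ d d' : ℕ, d ∣ n → d' ∣ n → 1 < d → d < d' →
    (∀ e : ℕ, e ∣ n → ¬(d < e ∧ e < d')) →
    ∃ e : ℕ, e ∣ m ∧ d < e ∧ e < d') ∧
  (∀ d d' : ℕ, d ∣ m → d' ∣ m → 1 < d → d < d' →
    (∀ e : ℕ, e ∣ m → ¬(d < e ∧ e < d')) →
    ∃ e : ℕ, e ∣ n ∧ d < e ∧ e < d')

/-- A positive integer `n` is separable if some `m` interlocks with it. -/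
def Separable (n : ℕ) : Prop := ∃ m : ℕ, Interlocking m n

/-- `primesProd k` is the product of the first `k` primes. -/
noncomputable def primesProd (k : ℕ) : ℕ := ∏ i ∈ Finset.range k, Nat.nth Nat.Prime i

namespace Interlocking

variable {m n : ℕ}

theorem symm (h : Interlocking m n) : Interlocking n m :=
  ⟨h.2.1, h.1, h.2.2.2, h.2.2.1⟩

theorem card_divisors_le (h : Interlocking m n) : n.divisors.card ≤ m.divisors.card + 1 := by
  obtain ⟨hm, hn, hsep, -⟩ := h
  rw [← Finset.card_erase_add_one (Nat.one_mem_divisors.2 hn.ne'),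
    ← Finset.card_erase_add_one (Nat.one_mem_divisors.2 hm.ne')]
  refine Nat.succ_le_succ (Finset.card_le_of_interleaved fun d hd d' hd' hlt hcons => ?_)
  simp only [Finset.mem_erase, Nat.mem_divisors] at hd hd' hcons ⊢
  have one_lt_d : 1 < d := lt_of_le_of_ne' (Nat.pos_of_dvd_of_pos hd.2.1 hn) hd.1
  obtain ⟨e, hem, hde, hed'⟩ := hsep d d' hd.2.1 hd'.2.1 one_lt_d hlt fun e hen he =>
    hcons e ⟨(one_lt_d.trans he.1).ne', hen, hn.ne'⟩ he
  exact ⟨e, ⟨(one_lt_d.trans hde).ne', hem, hm.ne'⟩, hde, hed'⟩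

end Interlocking

theorem two_pow_add_one_lt_two_pow {a b : ℕ} (hab : a < b) (hb : 1 < b) :
    2 ^ a + 1 < 2 ^ b :=
  calc
    2 ^ a + 1 < 2 ^ (b - 1) + 2 ^ (b - 1) :=
      add_lt_add_of_le_of_lt (Nat.pow_le_pow_right two_pos (Nat.le_sub_one_of_lt hab))
        (Nat.one_lt_two_pow (Nat.sub_ne_zero_of_lt hb))
    _ = 2 ^ b := Nat.two_pow_pred_add_two_pow_pred (zero_lt_one.trans hb)

theorem eq_of_two_pow_le_two_pow_add_one {a b : ℕ} (hab : 2 ^ a ≤ 2 ^ b + 1)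
    (hba : 2 ^ b ≤ 2 ^ a + 1) (hsum : 1 < a + b) : a = b := by
  rcases lt_trichotomy a b with h | h | h
  · exact absurd hba (two_pow_add_one_lt_two_pow h (by lia)).not_ge
  · exact h
  · exact absurd hab (two_pow_add_one_lt_two_pow h (by lia)).not_ge

theorem card_divisors_of_squarefree {n : ℕ} (hn : Squarefree n) :
    n.divisors.card = 2 ^ n.primeFactors.card := by
  rw [Nat.card_divisors hn.ne_zero]
  refine Finset.prod_eq_pow_card fun p hp => ?_
  rw [Nat.factorization_eq_one_of_squarefree hn (Nat.prime_of_mem_primeFactors hp)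
    (Nat.dvd_of_mem_primeFactors hp)]

theorem Interlocking.card_primeFactors_eq {m n : ℕ} (h : Interlocking m n) (hm : Squarefree m)
    (hn : Squarefree n) (hcard : 1 < m.primeFactors.card + n.primeFactors.card) :
    m.primeFactors.card = n.primeFactors.card := by
  have hnm := h.card_divisors_le
  have hmn := h.symm.card_divisors_le
  rw [card_divisors_of_squarefree hm, card_divisors_of_squarefree hn] at hnm hmn
  exact eq_of_two_pow_le_two_pow_add_one hmn hnm hcard

theorem nth_prime_injective : Function.Injective (Nat.nth Nat.Prime) :=
  Nat.nth_injective Nat.infinite_setOfPred_prime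

theorem squarefree_primesProd (k : ℕ) : Squarefree (primesProd k) := by
  refine Finset.squarefree_prod_of_pairwise_isCoprime (fun i _ j _ hij => ?_)
    fun i _ => (Nat.prime_nth_prime i).prime.squarefree
  rw [Function.onFun, ← Nat.coprime_iff_isRelPrime,
    Nat.coprime_primes (Nat.prime_nth_prime i) (Nat.prime_nth_prime j)]
  exact nth_prime_injective.ne hij

theorem primeFactors_primesProd (k : ℕ) :
    (primesProd k).primeFactors = (Finset.range k).image (Nat.nth Nat.Prime) := by
  have nth_prime : ∀ p ∈ (Finset.range k).image (Nat.nth Nat.Prime), p.Prime :=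
    Finset.forall_mem_image.2 fun i _ => Nat.prime_nth_prime i
  rw [← Nat.primeFactors_prod nth_prime, Finset.prod_image nth_prime_injective.injOn, primesProd]

theorem card_primeFactors_primesProd (k : ℕ) : (primesProd k).primeFactors.card = k := by
  rw [primeFactors_primesProd, Finset.card_image_of_injective _ nth_prime_injective,
    Finset.card_range]

theorem no_interlocking_primesProd_odd_general {N : ℕ} (hN : Squarefree N)
    (hcard : 1 < N.primeFactors.card) (hodd : Odd N.primeFactors.card) :
    ¬ ∃ m n : ℕ, Interlocking m n ∧ m * n = N := by
  rintro ⟨m, n, h, rfl⟩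
  obtain ⟨hcop, hm, hn⟩ := Nat.squarefree_mul_iff.1 hN
  rw [hcop.primeFactors_mul, Finset.card_union_of_disjoint hcop.disjoint_primeFactors]
    at hcard hodd
  rw [h.card_primeFactors_eq hm hn hcard] at hodd
  exact Nat.not_odd_iff_even.2 ⟨_, rfl⟩ hodd

/-- If `k > 1` is odd, then no interlocking pair has product equal to the
product of the first `k` primes. -/
theorem no_interlocking_primesProd_odd (k : ℕ) (hk : 1 < k) (hodd : Odd k) :
    ¬ ∃ m n : ℕ, Interlocking m n ∧ m * n = primesProd k :=
  no_interlocking_primesProd_odd_general (squarefree_primesProd k)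
    (by rwa [card_primeFactors_primesProd]) (by rwa [card_primeFactors_primesProd])
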